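/- Central-charge part of the coincidences C_{psi,2B}(n,m) ≅ W_s(sp_{2r}) (Appendix B, type 2B): for all integers m, n ≥ 0 and r ≥ 1, the identity c2B(n,m,psi) = csp(r,t) holds in each of the following six cases, whenever psi is not 0 or 1/2, t ≠ 0, and all displayed denominators are nonzero: (1) psi = (1+2*m-2*n+2*r)/(2*(1+2*m)), t = (1+2*m-2*n+2*r)/(4*(r-n)) with r ≠ n; (2) psi = (1+2*m-2*n)/(2*(1+2*m+2*r)), t = (1+2*m+2*r)/(4*(n+r)); (3) psi = (m-n+r)/(2*m-1), t = (1-2*n+2*r)/(4*(m-n+r)) with r ≠ n-m; (4) psi = (m-n-r)/(2*m-2*r-1), t = (1-2*m+2*r)/(4*(n-m+r)) with r ≠ m-n; (5) psi = (2*m-2*n-2*r-1)/(4*(m-r)), t = (1-2*m+2*n+2*r)/(4*(r-m)) with r ≠ m; (6) psi = (2*m-2*n-1)/(4*(m+r)), t = (1+2*n+2*r)/(4*(m+r)). -/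

import Mathlib

noncomputable def c2B (n m psi : ℝ) : ℝ :=
  -((-m + n - psi + 2 * m * psi) * (1 - 2 * m + 2 * n + 4 * m * psi) * (-1 - 2 * m + 2 * n + 2 * psi + 4 * m * psi)) / (2 * psi * (2 * psi - 1))

noncomputable def csp (r t : ℝ) : ℝ :=
  -(r * ((2 * r + 1) * t - r - 1) * ((4 * r - 2) * t - 2 * r - 1)) / t

/-!
For `psi = a / b` put `ε = (2 a, b - 2 a, -b)` and `w = 2 n b - 2 m (b - 2 a)`. Then `c2B n m psi`
equals `-∏ (w - εᵢ) / (2 ∏ εᵢ)`, which is symmetric in the `εᵢ` and unchanged when `ε` and `w` are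
scaled together. Moreover `csp r t` is the value of `c2B` at `n = -1/2`, `m = r`, `psi = t`. In each
of the six families the weights of `t` are, up to a factor, a permutation of the weights of `psi`,
each element of `S₃` occurring exactly once, and `w` is scaled by the same factor.
-/

section TrialityCharge

variable {ι K : Type*} [Fintype ι] [Field K]

/-- The central charge as a rational function of weights `ε` and a parameter `w`. Both `c2B` and
`csp` are of this form with three weights of sum zero, and permuting these is what relates different
values of `psi`. -/
def trialityCharge (ε : ι → K) (w : K) : K :=
  -(∏ i, (w - ε i)) / (2 * ∏ i, ε i)

theorem trialityCharge_comp_perm (ε : ι → K) (w : K) (σ : Equiv.Perm ι) :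
    trialityCharge (ε ∘ σ) w = trialityCharge ε w := by
  simp only [trialityCharge, Function.comp_apply, Equiv.prod_comp σ ε,
    Equiv.prod_comp σ fun i => w - ε i]

theorem trialityCharge_smul (ε : ι → K) (w : K) {k : K} (hk : k ≠ 0) :
    trialityCharge (k • ε) (k * w) = trialityCharge ε w := by
  simp only [trialityCharge, Pi.smul_apply, smul_eq_mul, ← mul_sub, Finset.prod_mul_distrib,
    Finset.prod_const]
  rw [mul_left_comm, ← mul_neg, mul_div_mul_left _ _ (pow_ne_zero _ hk)]

end TrialityCharge

/-- The three weights, with sum zero, of the central charge at the parameter `psi = a / b`. They are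
written in the homogeneous coordinates `a`, `b`, so that comparing two such triples up to a factor
involves no division. -/
def trialityWeights (a b : ℝ) : Fin 3 → ℝ := ![2 * a, b - 2 * a, -b]

theorem trialityWeights_ne_zero {a b : ℝ} (h0 : a / b ≠ 0) (h1 : a / b ≠ 1 / 2) (i : Fin 3) :
    trialityWeights a b i ≠ 0 := by
  obtain ⟨ha, hb⟩ := div_ne_zero_iff.mp h0
  have hab : b - 2 * a ≠ 0 := fun h => h1 <| by
    rw [div_eq_div_iff hb two_ne_zero]
    linarith
  fin_cases i <;> simp [trialityWeights, ha, hb, hab]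

theorem trialityWeights_eq_smul (a : ℝ) {b : ℝ} (hb : b ≠ 0) :
    trialityWeights a b = b • trialityWeights (a / b) 1 := by
  ext i
  fin_cases i <;> simp [trialityWeights, mul_sub, mul_left_comm b, mul_div_cancel₀ a hb]

theorem c2B_eq_trialityCharge (n m psi : ℝ) :
    c2B n m psi = trialityCharge (trialityWeights psi 1) (2 * n - 2 * m * (1 - 2 * psi)) := by
  simp only [c2B, trialityCharge, trialityWeights, Fin.prod_univ_three, Matrix.cons_val]
  rw [← mul_div_mul_left _ _ (two_ne_zero : (2 : ℝ) ≠ 0)]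
  congr 1 <;> ring

theorem c2B_div_eq_trialityCharge (n m a : ℝ) {b : ℝ} (hb : b ≠ 0) :
    c2B n m (a / b) =
      trialityCharge (trialityWeights a b) (2 * n * b - 2 * m * (b - 2 * a)) := by
  have hw : 2 * n * b - 2 * m * (b - 2 * a) = b * (2 * n - 2 * m * (1 - 2 * (a / b))) := by
    field_simp
  rw [hw, trialityWeights_eq_smul a hb, trialityCharge_smul _ _ hb, c2B_eq_trialityCharge]

-- For `n = -1/2` the superalgebra `osp_{2n+1|2m}` degenerates to `osp_{0|2m} = sp_{2m}`.
-- At `t = 1/2` the right-hand side is a division by zero.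
theorem csp_eq_c2B_neg_half (r : ℝ) {t : ℝ} (ht : t ≠ 1 / 2) : csp r t = c2B (-1 / 2) r t := by
  have h : 2 * t - 1 ≠ 0 := fun h => ht (by linarith)
  rw [csp, c2B, ← mul_div_mul_right _ _ (mul_ne_zero two_ne_zero h)]
  congr 1 <;> ring

section Triality

variable {n m a b c d k : ℝ}

theorem c2B_div_eq_c2B_div {n' m' : ℝ} (hb : b ≠ 0) (hd : d ≠ 0) (σ : Equiv.Perm (Fin 3))
    (hk : k ≠ 0) (hε : ∀ i, trialityWeights c d (σ i) = k * trialityWeights a b i)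
    (hw : 2 * n' * d - 2 * m' * (d - 2 * c) = k * (2 * n * b - 2 * m * (b - 2 * a))) :
    c2B n m (a / b) = c2B n' m' (c / d) :=
  calc c2B n m (a / b)
      = trialityCharge (trialityWeights a b) (2 * n * b - 2 * m * (b - 2 * a)) :=
        c2B_div_eq_trialityCharge n m a hb
    _ = trialityCharge (trialityWeights c d ∘ σ) (2 * n' * d - 2 * m' * (d - 2 * c)) := by
        rw [show trialityWeights c d ∘ σ = k • trialityWeights a b from funext hε, hw,
          trialityCharge_smul _ _ hk]
    _ = c2B n' m' (c / d) := by
        rw [trialityCharge_comp_perm, c2B_div_eq_trialityCharge n' m' c hd]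

theorem c2B_div_eq_csp_div {r : ℝ} (h0 : a / b ≠ 0) (h1 : a / b ≠ 1 / 2)
    (σ : Equiv.Perm (Fin 3)) (hk : k ≠ 0)
    (hε : ∀ i, trialityWeights c d (σ i) = k * trialityWeights a b i)
    (hw : -d - 2 * r * (d - 2 * c) = k * (2 * n * b - 2 * m * (b - 2 * a))) :
    c2B n m (a / b) = csp r (c / d) := by
  have hweights (i : Fin 3) : trialityWeights c d i ≠ 0 := by
    have hi : trialityWeights c d i = k * trialityWeights a b (σ.symm i) := by
      simpa using hε (σ.symm i)
    exact hi ▸ mul_ne_zero hk (trialityWeights_ne_zero h0 h1 _)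
  have hd : d ≠ 0 := neg_ne_zero.mp (hweights 2)
  have ht : c / d ≠ 1 / 2 := fun h => hweights 1 <| show d - 2 * c = 0 by
    rw [div_eq_div_iff hd two_ne_zero] at h
    linarith
  rw [csp_eq_c2B_neg_half r ht]
  exact c2B_div_eq_c2B_div (div_ne_zero_iff.mp h0).2 hd σ hk hε (by linarith)

end Triality

theorem stmt10_general {n m r psi t : ℝ} (h0 : psi ≠ 0) (h1 : psi ≠ 1 / 2)
    (h :
      (psi = (1 + 2 * m - 2 * n + 2 * r) / (2 * (1 + 2 * m)) ∧
        t = (1 + 2 * m - 2 * n + 2 * r) / (4 * (r - n))) ∨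
      (psi = (1 + 2 * m - 2 * n) / (2 * (1 + 2 * m + 2 * r)) ∧
        t = (1 + 2 * m + 2 * r) / (4 * (n + r))) ∨
      (psi = (m - n + r) / (2 * m - 1) ∧
        t = (1 - 2 * n + 2 * r) / (4 * (m - n + r))) ∨
      (psi = (m - n - r) / (2 * m - 2 * r - 1) ∧
        t = (1 - 2 * m + 2 * r) / (4 * (n - m + r))) ∨
      (psi = (2 * m - 2 * n - 2 * r - 1) / (4 * (m - r)) ∧
        t = (1 - 2 * m + 2 * n + 2 * r) / (4 * (r - m))) ∨
      (psi = (2 * m - 2 * n - 1) / (4 * (m + r)) ∧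
        t = (1 + 2 * n + 2 * r) / (4 * (m + r)))) :
    c2B n m psi = csp r t := by
  rcases h with ⟨rfl, rfl⟩ | ⟨rfl, rfl⟩ | ⟨rfl, rfl⟩ | ⟨rfl, rfl⟩ | ⟨rfl, rfl⟩ | ⟨rfl, rfl⟩
  · refine c2B_div_eq_csp_div h0 h1 (k := 1) ⟨![0, 2, 1], ![0, 2, 1], by decide, by decide⟩
      (by norm_num) (fun | 0 | 1 | 2 => ?_) (by ring)
    all_goals simp only [trialityWeights, Equiv.coe_fn_mk, Matrix.cons_val]; ring
  · refine c2B_div_eq_csp_div h0 h1 (k := -1) ⟨![1, 2, 0], ![2, 0, 1], by decide, by decide⟩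
      (by norm_num) (fun | 0 | 1 | 2 => ?_) (by ring)
    all_goals simp only [trialityWeights, Equiv.coe_fn_mk, Matrix.cons_val]; ring
  · refine c2B_div_eq_csp_div h0 h1 (k := -2) ⟨![2, 0, 1], ![1, 2, 0], by decide, by decide⟩
      (by norm_num) (fun | 0 | 1 | 2 => ?_) (by ring)
    all_goals simp only [trialityWeights, Equiv.coe_fn_mk, Matrix.cons_val]; ring
  · refine c2B_div_eq_csp_div h0 h1 (k := 2) ⟨![2, 1, 0], ![2, 1, 0], by decide, by decide⟩
      (by norm_num) (fun | 0 | 1 | 2 => ?_) (by ring)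
    all_goals simp only [trialityWeights, Equiv.coe_fn_mk, Matrix.cons_val]; ring
  · refine c2B_div_eq_csp_div h0 h1 (k := -1) ⟨![0, 1, 2], ![0, 1, 2], by decide, by decide⟩
      (by norm_num) (fun | 0 | 1 | 2 => ?_) (by ring)
    all_goals simp only [trialityWeights, Equiv.coe_fn_mk, Matrix.cons_val]; ring
  · refine c2B_div_eq_csp_div h0 h1 (k := 1) ⟨![1, 0, 2], ![1, 0, 2], by decide, by decide⟩
      (by norm_num) (fun | 0 | 1 | 2 => ?_) (by ring)
    all_goals simp only [trialityWeights, Equiv.coe_fn_mk, Matrix.cons_val]; ring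

theorem stmt10 (n m r : ℤ) (hn : 0 ≤ n) (hm : 0 ≤ m) (hr : 1 ≤ r) :
    (∀ psi t : ℝ,
      psi = (1 + 2 * (m : ℝ) - 2 * (n : ℝ) + 2 * (r : ℝ)) / (2 * (1 + 2 * (m : ℝ))) →
      t = (1 + 2 * (m : ℝ) - 2 * (n : ℝ) + 2 * (r : ℝ)) / (4 * ((r : ℝ) - (n : ℝ))) →
      (2 * (1 + 2 * (m : ℝ))) ≠ 0 →
      (4 * ((r : ℝ) - (n : ℝ))) ≠ 0 →
      r ≠ n →
      psi ≠ 0 →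
      psi ≠ 1 / 2 →
      t ≠ 0 →
      c2B (n : ℝ) (m : ℝ) psi = csp (r : ℝ) t) ∧
    (∀ psi t : ℝ,
      psi = (1 + 2 * (m : ℝ) - 2 * (n : ℝ)) / (2 * (1 + 2 * (m : ℝ) + 2 * (r : ℝ))) →
      t = (1 + 2 * (m : ℝ) + 2 * (r : ℝ)) / (4 * ((n : ℝ) + (r : ℝ))) →
      (2 * (1 + 2 * (m : ℝ) + 2 * (r : ℝ))) ≠ 0 →
      (4 * ((n : ℝ) + (r : ℝ))) ≠ 0 →
      psi ≠ 0 →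
      psi ≠ 1 / 2 →
      t ≠ 0 →
      c2B (n : ℝ) (m : ℝ) psi = csp (r : ℝ) t) ∧
    (∀ psi t : ℝ,
      psi = ((m : ℝ) - (n : ℝ) + (r : ℝ)) / (2 * (m : ℝ) - 1) →
      t = (1 - 2 * (n : ℝ) + 2 * (r : ℝ)) / (4 * ((m : ℝ) - (n : ℝ) + (r : ℝ))) →
      (2 * (m : ℝ) - 1) ≠ 0 →
      (4 * ((m : ℝ) - (n : ℝ) + (r : ℝ))) ≠ 0 →
      r ≠ n - m →
      psi ≠ 0 →
      psi ≠ 1 / 2 →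
      t ≠ 0 →
      c2B (n : ℝ) (m : ℝ) psi = csp (r : ℝ) t) ∧
    (∀ psi t : ℝ,
      psi = ((m : ℝ) - (n : ℝ) - (r : ℝ)) / (2 * (m : ℝ) - 2 * (r : ℝ) - 1) →
      t = (1 - 2 * (m : ℝ) + 2 * (r : ℝ)) / (4 * ((n : ℝ) - (m : ℝ) + (r : ℝ))) →
      (2 * (m : ℝ) - 2 * (r : ℝ) - 1) ≠ 0 →
      (4 * ((n : ℝ) - (m : ℝ) + (r : ℝ))) ≠ 0 →
      r ≠ m - n →
      psi ≠ 0 →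
      psi ≠ 1 / 2 →
      t ≠ 0 →
      c2B (n : ℝ) (m : ℝ) psi = csp (r : ℝ) t) ∧
    (∀ psi t : ℝ,
      psi = (2 * (m : ℝ) - 2 * (n : ℝ) - 2 * (r : ℝ) - 1) / (4 * ((m : ℝ) - (r : ℝ))) →
      t = (1 - 2 * (m : ℝ) + 2 * (n : ℝ) + 2 * (r : ℝ)) / (4 * ((r : ℝ) - (m : ℝ))) →
      (4 * ((m : ℝ) - (r : ℝ))) ≠ 0 →
      (4 * ((r : ℝ) - (m : ℝ))) ≠ 0 →
      r ≠ m →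
      psi ≠ 0 →
      psi ≠ 1 / 2 →
      t ≠ 0 →
      c2B (n : ℝ) (m : ℝ) psi = csp (r : ℝ) t) ∧
    (∀ psi t : ℝ,
      psi = (2 * (m : ℝ) - 2 * (n : ℝ) - 1) / (4 * ((m : ℝ) + (r : ℝ))) →
      t = (1 + 2 * (n : ℝ) + 2 * (r : ℝ)) / (4 * ((m : ℝ) + (r : ℝ))) →
      (4 * ((m : ℝ) + (r : ℝ))) ≠ 0 →
      psi ≠ 0 →
      psi ≠ 1 / 2 →
      t ≠ 0 →
      c2B (n : ℝ) (m : ℝ) psi = csp (r : ℝ) t) := by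
  refine ⟨?_, ?_, ?_, ?_, ?_, ?_⟩ <;> intros <;>
    exact stmt10_general (by assumption) (by assumption) (by grind only)
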